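/- Let L be a finite atomic graded lattice, let B be a basis of L, and let I be a maximal (under inclusion) independent set of L. Then for every atom a ∈ B there exists an atom b ∈ I such that (B ∖ {a}) ∪ {b} is a maximal independent set of L. -/

import Mathlib

open Set

/-- `rk` is a rank function witnessing that a (bounded) lattice is graded:
it sends `⊥` to `0`, is strictly monotone, and increases by exactly one along covers. -/
def IsGradedRk {L : Type*} [CompleteLattice L] (rk : L → ℕ) : Prop :=
  rk ⊥ = 0 ∧ (∀ a b : L, a < b → rk a < rk b) ∧ (∀ a b : L, a ⋖ b → rk b = rk a + 1)

/-- `D` is bounded below with respect to the order on atoms encoded by the labeling `ω`: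
`D` is nonempty and some atom `a` is a strict `ω`-lower bound of every element of `D`
with `a ≤ ⋁ D`. -/
def IsBB {L : Type*} [CompleteLattice L] (ω : L → ℕ) (D : Set L) : Prop :=
  D.Nonempty ∧ ∃ a : L, IsAtom a ∧ (∀ d ∈ D, ω a < ω d) ∧ a ≤ sSup D

/-- `B` is a set of atoms containing no bounded-below subset. -/
def IsNBB {L : Type*} [CompleteLattice L] (ω : L → ℕ) (B : Set L) : Prop :=
  (∀ b ∈ B, IsAtom b) ∧ ∀ D ⊆ B, ¬ IsBB ω D

/-- The family `I(L)` of independent sets of the lattice `L`: all sets of atoms that are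
NBB with respect to some linear order on the atoms (a linear order on the atoms of the
finite lattice `L` being encoded as an `ℕ`-valued labeling injective on atoms). -/
def latIndep (L : Type*) [CompleteLattice L] : Set (Set L) :=
  { A | ∃ ω : L → ℕ, Set.InjOn ω {a : L | IsAtom a} ∧ IsNBB ω A }

/-- A basis of a (finite atomic graded) lattice with rank function `rk`: a maximal
independent set every subset of which is geometric. -/
def IsLatBasis {L : Type*} [CompleteLattice L] (rk : L → ℕ) (B : Set L) : Prop :=
  B ∈ latIndep L ∧ (∀ A ∈ latIndep L, B ⊆ A → A = B) ∧ ∀ S ⊆ B, S.ncard = rk (sSup S)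

/-!
Over a strictly monotone `rk`, removing the `ω`-least atom of an NBB set strictly lowers its join,
so an independent set has at most as many elements as the rank of its join, and independent sets
attaining the rank of the join of all atoms are maximal. A basis `B` attains it, and geometricity of
`B` and `B \ {a}` forces `a ≰ ⋁ (B \ {a})`. If `a ≤ ⋁ I`, some `b ∈ I` is therefore not below
`⋁ (B \ {a})`; adjoining `b` to `B \ {a}` as the new `ω`-least atom keeps it independent and
restores the number of elements.
-/

section

variable {L : Type*} [CompleteLattice L] {rk ω : L → ℕ} {A B I : Set L} {a b : L}

theorem IsNBB.subset (hB : IsNBB ω B) (hAB : A ⊆ B) : IsNBB ω A :=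
  ⟨fun x hx => hB.1 x (hAB hx), fun D hD => hB.2 D (hD.trans hAB)⟩

theorem IsNBB.not_le_sSup_of_forall_lt (hA : IsNBB ω A) (ha : IsAtom a)
    (hlt : ∀ d ∈ A, ω a < ω d) : ¬ a ≤ sSup A := by
  intro hle
  rcases A.eq_empty_or_nonempty with rfl | hne
  · exact ha.1 (le_bot_iff.1 (sSup_empty (α := L) ▸ hle))
  · exact hA.2 A Subset.rfl ⟨hne, a, ha, hlt, hle⟩

theorem IsNBB.finset_card_le_rk_sSup (hrk : StrictMono rk) (hω : InjOn ω {a : L | IsAtom a})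
    {s : Finset L} (hs : IsNBB ω (s : Set L)) : s.card ≤ rk (sSup (s : Set L)) := by
  classical
  induction s using Finset.induction_on_min_value ω with
  | empty => exact Nat.zero_le _
  | insert a s has hmin ih =>
    rw [Finset.coe_insert] at hs ⊢
    have hs' : IsNBB ω (s : Set L) := hs.subset (subset_insert a _)
    have ha : IsAtom a := hs.1 a (mem_insert a _)
    have hlt : ∀ d ∈ (s : Set L), ω a < ω d := fun d hd =>
      (hmin d hd).lt_of_ne (hω.ne ha (hs'.1 d hd) fun h => has (h ▸ hd))
    have hjoin : sSup (s : Set L) < sSup (insert a (s : Set L)) :=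
      (sSup_le_sSup (subset_insert a _)).lt_of_not_ge fun h =>
        hs'.not_le_sSup_of_forall_lt ha hlt ((le_sSup (mem_insert a _)).trans h)
    calc (insert a s).card = s.card + 1 := Finset.card_insert_of_notMem has
      _ ≤ rk (sSup (s : Set L)) + 1 := Nat.succ_le_succ (ih hs')
      _ ≤ rk (sSup (insert a (s : Set L))) := hrk hjoin

theorem isAtom_of_mem_latIndep (hA : A ∈ latIndep L) (ha : a ∈ A) : IsAtom a :=
  let ⟨_, _, hNBB⟩ := hA
  hNBB.1 a ha

theorem mem_latIndep_of_subset (hB : B ∈ latIndep L) (hAB : A ⊆ B) : A ∈ latIndep L :=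
  let ⟨ω, hω, hNBB⟩ := hB
  ⟨ω, hω, hNBB.subset hAB⟩

theorem encard_le_rk_sSup_of_mem_latIndep (hrk : StrictMono rk) (hA : A ∈ latIndep L) :
    A.encard ≤ rk (sSup A) := by
  obtain ⟨ω, hω, hNBB⟩ := hA
  have card_le : ∀ s : Finset L, (s : Set L) ⊆ A → s.card ≤ rk (sSup A) := fun s hs =>
    ((hNBB.subset hs).finset_card_le_rk_sSup hrk hω).trans (hrk.monotone (sSup_le_sSup hs))
  have hfin : A.Finite := by
    by_contra hinf
    obtain ⟨s, hs, hcard⟩ := Set.Infinite.exists_subset_card_eq hinf (rk (sSup A) + 1)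
    have := card_le s hs
    omega
  lift A to Finset L using hfin
  rw [encard_coe_eq_coe_finsetCard]
  exact_mod_cast card_le A Subset.rfl

theorem finite_of_mem_latIndep (hrk : StrictMono rk) (hA : A ∈ latIndep L) : A.Finite :=
  finite_of_encard_le_coe (encard_le_rk_sSup_of_mem_latIndep hrk hA)

theorem insert_mem_latIndep (hA : A ∈ latIndep L) (hb : IsAtom b) (hbA : ¬ b ≤ sSup A) :
    insert b A ∈ latIndep L := by
  classical
  obtain ⟨ω, hω, hNBB⟩ := hA
  refine ⟨fun x => if x = b then 0 else ω x + 1, ?_, ?_, ?_⟩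
  · intro x hx y hy hxy
    dsimp only at hxy
    split_ifs at hxy with hxb hyb
    · exact hxb.trans hyb.symm
    · exact hω hx hy (Nat.succ.inj hxy)
  · rintro x (rfl | hx)
    exacts [hb, hNBB.1 x hx]
  · rintro D hD ⟨hne, c, hc, hlt, hle⟩
    have hbD : b ∉ D := fun h => by simpa using hlt b h
    have hDA : D ⊆ A := (subset_insert_iff_of_notMem hbD).1 hD
    have hcb : c ≠ b := by
      rintro rfl
      exact hbA (hle.trans (sSup_le_sSup hDA))
    refine hNBB.2 D hDA ⟨hne, c, hc, fun d hd => ?_, hle⟩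
    simpa [hcb, ne_of_mem_of_not_mem hd hbD] using hlt d hd

theorem le_sSup_of_maximal_latIndep (hA : Maximal (· ∈ latIndep L) A) (hb : IsAtom b) :
    b ≤ sSup A := by
  by_contra hbA
  exact hbA (le_sSup (hA.le_of_ge (insert_mem_latIndep hA.prop hb hbA) (subset_insert b A)
    (mem_insert b A)))

theorem sSup_eq_of_maximal_latIndep (hA : Maximal (· ∈ latIndep L) A) :
    sSup A = sSup {a : L | IsAtom a} :=
  le_antisymm (sSup_le_sSup fun _ => isAtom_of_mem_latIndep hA.prop)
    (sSup_le fun _ => le_sSup_of_maximal_latIndep hA)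

theorem maximal_latIndep_of_rk_le_encard (hrk : StrictMono rk) (hA : A ∈ latIndep L)
    (hcard : rk (sSup {a : L | IsAtom a}) ≤ A.encard) : Maximal (· ∈ latIndep L) A := by
  refine ⟨hA, fun A' hA' hAA' => ?_⟩
  have hrank : rk (sSup A') ≤ rk (sSup {a : L | IsAtom a}) :=
    hrk.monotone (sSup_le_sSup fun _ => isAtom_of_mem_latIndep hA')
  have hencard : A'.encard ≤ A.encard :=
    calc A'.encard ≤ rk (sSup A') := encard_le_rk_sSup_of_mem_latIndep hrk hA'
      _ ≤ rk (sSup {a : L | IsAtom a}) := by exact_mod_cast hrank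
      _ ≤ A.encard := hcard
  exact ((finite_of_mem_latIndep hrk hA).eq_of_subset_of_encard_le hAA' hencard).ge

theorem IsLatBasis.maximal (hB : IsLatBasis rk B) : Maximal (· ∈ latIndep L) B :=
  ⟨hB.1, fun A hA hBA => (hB.2.1 A hA hBA).le⟩

theorem IsLatBasis.encard_eq (hrk : StrictMono rk) (hB : IsLatBasis rk B) :
    B.encard = rk (sSup {a : L | IsAtom a}) := by
  rw [← (finite_of_mem_latIndep hrk hB.1).cast_ncard_eq, hB.2.2 B Subset.rfl,
    sSup_eq_of_maximal_latIndep hB.maximal]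

theorem not_le_sSup_sdiff_singleton_of_geometric (hfin : B.Finite)
    (hgeom : ∀ S ⊆ B, S.ncard = rk (sSup S)) (ha : a ∈ B) : ¬ a ≤ sSup (B \ {a}) := by
  intro hle
  have hjoin : sSup B = sSup (B \ {a}) :=
    calc sSup B = sSup (insert a (B \ {a})) := by rw [insert_sdiff_self_of_mem ha]
      _ = a ⊔ sSup (B \ {a}) := sSup_insert
      _ = sSup (B \ {a}) := sup_eq_right.2 hle
  have hcard : (B \ {a}).ncard = B.ncard := by
    rw [hgeom _ sdiff_subset, hgeom B Subset.rfl, hjoin]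
  exact (ncard_sdiff_singleton_lt_of_mem ha hfin).ne hcard

theorem basis_exchange_general (hrk : StrictMono rk) (hB : IsLatBasis rk B)
    (hI : ∀ b ∈ I, IsAtom b) (ha : a ∈ B) (haI : a ≤ sSup I) :
    ∃ b ∈ I, Maximal (· ∈ latIndep L) (insert b (B \ {a})) := by
  have haB : ¬ a ≤ sSup (B \ {a}) :=
    not_le_sSup_sdiff_singleton_of_geometric (finite_of_mem_latIndep hrk hB.1) hB.2.2 ha
  obtain ⟨b, hbI, hb⟩ : ∃ b ∈ I, ¬ b ≤ sSup (B \ {a}) := by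
    by_contra! h
    exact haB (haI.trans (sSup_le h))
  have hindep : insert b (B \ {a}) ∈ latIndep L :=
    insert_mem_latIndep (mem_latIndep_of_subset hB.1 sdiff_subset) (hI b hbI) hb
  have hencard : (insert b (B \ {a})).encard = B.encard := by
    rw [encard_insert_of_notMem fun h => hb (le_sSup h), encard_sdiff_singleton_add_one ha]
  exact ⟨b, hbI, maximal_latIndep_of_rk_le_encard hrk hindep
    (hencard.trans (hB.encard_eq hrk)).ge⟩

end

/-- Let `L` be a finite atomic graded lattice, `B` a basis of `L` and `I` a
maximal independent set of `L`. Then for every atom `a ∈ B` there is an atom `b ∈ I` such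
that `(B \ {a}) ∪ {b}` is again a maximal independent set of `L`. -/
theorem basis_exchange
    {L : Type*} [CompleteLattice L] [Fintype L] [IsAtomistic L]
    (rk : L → ℕ) (hrk : IsGradedRk rk)
    (B I : Set L) (hB : IsLatBasis rk B)
    (hI : I ∈ latIndep L) (hImax : ∀ A ∈ latIndep L, I ⊆ A → A = I)
    (a : L) (ha : a ∈ B) :
    ∃ b ∈ I, insert b (B \ {a}) ∈ latIndep L ∧
      ∀ A ∈ latIndep L, insert b (B \ {a}) ⊆ A → A = insert b (B \ {a}) := by
  obtain ⟨b, hbI, hb⟩ := basis_exchange_general hrk.2.1 hB (fun _ => isAtom_of_mem_latIndep hI) ha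
    (le_sSup_of_maximal_latIndep ⟨hI, fun A hA hIA => (hImax A hA hIA).le⟩
      (isAtom_of_mem_latIndep hB.1 ha))
  exact ⟨b, hbI, hb.prop, fun A hA hbA => (hb.eq_of_subset hA hbA).symm⟩
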